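/- arXiv:1407.1983 — 5 statements merged into one kernel-verified Lean document; each statement's English description precedes it below -/
import Mathlib

section
/- A function f : {1,…,k} → ℕ is an S-parking function of the finite sets A_1,…,A_k if and only if there exists a permutation π_1,π_2,…,π_k of {1,…,k} such that for every i = 1,2,…,k, |A_{π_i} ∩ ⋁_{i ≤ j ≤ k} A_{π_j}| > f(π_i). -/
/-- `⋁_{i ∈ I} A i`: the (finite) set of elements belonging to exactly one of the
sets `A i` with `i ∈ I`. -/
def onlyOne {α : Type*} [DecidableEq α] {k : ℕ} (A : Fin k → Finset α)
    (I : Finset (Fin k)) : Finset α :=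
  (I.biUnion A).filter fun e => (I.filter fun i => e ∈ A i).card = 1

/-- `f` is an S-parking function of the sets `A 0, …, A (k-1)`. -/
def IsSParkingFun {α : Type*} [DecidableEq α] {k : ℕ} (A : Fin k → Finset α)
    (f : Fin k → ℕ) : Prop :=
  ∀ I : Finset (Fin k), I.Nonempty → ∃ i ∈ I, f i < (A i ∩ onlyOne A I).card

/-!
Choosing an index that witnesses the parking condition for the set of all indices, deleting it, and
repeating yields the permutation. Conversely, given the permutation, the member of `I` listed first
is a witness for `I`: all of `I` lies in the tail starting there, and shrinking a set of indices can
only enlarge the part of `A i` covered exactly once, as long as `i` is kept.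
-/

section Elimination

variable {ι : Type*} [DecidableEq ι] {P : ι → Finset ι → Prop}

theorem exists_injective_forall_image_Ici
    (hP : ∀ I : Finset ι, I.Nonempty → ∃ i ∈ I, P i I) {n : ℕ} {I : Finset ι} (hI : I.card = n) :
    ∃ e : Fin n → ι, Function.Injective e ∧ Finset.univ.image e = I ∧
      ∀ j, P (e j) ((Finset.Ici j).image e) := by
  induction n generalizing I with
  | zero =>
    obtain rfl := Finset.card_eq_zero.mp hI
    exact ⟨Fin.elim0, Function.injective_of_subsingleton _, by simp, fun j => j.elim0⟩
  | succ n ih =>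
    obtain ⟨a, ha, hPa⟩ := hP I (Finset.card_pos.mp (by omega))
    obtain ⟨e, he_inj, he_image, heP⟩ := ih (I := I.erase a) (by simp [ha, hI])
    have ha_range : a ∉ Set.range e := fun ⟨j, hj⟩ =>
      Finset.notMem_erase a I (he_image ▸ hj ▸ Finset.mem_image_of_mem e (Finset.mem_univ j))
    have cons_image : Finset.univ.image (Fin.cons a e : Fin (n + 1) → ι) = I := by
      rw [Fin.univ_succ, Finset.cons_eq_insert, Finset.image_insert, Finset.map_eq_image,
        Finset.image_image]
      exact (congrArg (insert a) he_image).trans (Finset.insert_erase ha)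
    refine ⟨Fin.cons a e, Fin.cons_injective_iff.mpr ⟨ha_range, he_inj⟩, cons_image, ?_⟩
    refine Fin.cases ?_ fun j => ?_
    · rwa [← bot_eq_zero, Finset.Ici_bot, cons_image]
    · rw [← Fin.map_succEmb_Ici, Finset.map_eq_image, Finset.image_image]
      exact heP j

theorem exists_equiv_forall_image_Ici [Fintype ι]
    (hP : ∀ I : Finset ι, I.Nonempty → ∃ i ∈ I, P i I) {n : ℕ} (hn : Fintype.card ι = n) :
    ∃ π : Fin n ≃ ι, ∀ j, P (π j) ((Finset.Ici j).image π) := by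
  obtain ⟨e, he_inj, -, heP⟩ := exists_injective_forall_image_Ici hP (I := Finset.univ) hn
  have he_bij : Function.Bijective e :=
    (Fintype.bijective_iff_injective_and_card e).mpr ⟨he_inj, by simp [hn]⟩
  exact ⟨Equiv.ofBijective e he_bij, heP⟩

theorem exists_mem_of_forall_image_Ici {κ : Type*} [LinearOrder κ] [LocallyFiniteOrderTop κ]
    (anti : ∀ {i : ι} {I J : Finset ι}, i ∈ I → I ⊆ J → P i J → P i I)
    {π : κ → ι} (hπ : Function.Surjective π) (h : ∀ j, P (π j) ((Finset.Ici j).image π))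
    {I : Finset ι} (hI : I.Nonempty) : ∃ i ∈ I, P i I := by
  obtain ⟨σ, hσ⟩ := hπ.hasRightInverse
  obtain ⟨i, hi, hi_min⟩ := I.exists_min_image σ hI
  have I_subset_tail : I ⊆ (Finset.Ici (σ i)).image π := fun x hx =>
    Finset.mem_image.mpr ⟨σ x, Finset.mem_Ici.mpr (hi_min x hx), hσ x⟩
  have hPi : P i ((Finset.Ici (σ i)).image π) := by simpa only [hσ i] using h (σ i)
  exact ⟨i, hi, anti hi I_subset_tail hPi⟩

end Elimination

section OnlyOne

variable {α : Type*} [DecidableEq α] {k : ℕ} {A : Fin k → Finset α} {I J : Finset (Fin k)}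

theorem mem_onlyOne {a : α} : a ∈ onlyOne A I ↔ ∃! i, i ∈ I ∧ a ∈ A i := by
  simp only [onlyOne, Finset.mem_filter, Finset.mem_biUnion, Finset.card_eq_one,
    Finset.singleton_iff_unique_mem]
  exact and_iff_right_of_imp ExistsUnique.exists

theorem inter_onlyOne_subset_of_subset {i : Fin k} (hi : i ∈ I) (hIJ : I ⊆ J) :
    A i ∩ onlyOne A J ⊆ A i ∩ onlyOne A I := by
  intro a ha
  obtain ⟨hai, haJ⟩ := Finset.mem_inter.mp ha
  refine Finset.mem_inter.mpr ⟨hai, mem_onlyOne.mpr ⟨i, ⟨hi, hai⟩, fun j ⟨hj, haj⟩ => ?_⟩⟩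
  exact (mem_onlyOne.mp haJ).unique ⟨hIJ hj, haj⟩ ⟨hIJ hi, hai⟩

end OnlyOne

theorem sparking_fun_iff_perm {α : Type*} [DecidableEq α] {k : ℕ}
    (A : Fin k → Finset α) (f : Fin k → ℕ) :
    IsSParkingFun A f ↔
      ∃ π : Equiv.Perm (Fin k), ∀ i : Fin k,
        f (π i) < (A (π i) ∩ onlyOne A ((Finset.Ici i).image π)).card := by
  constructor
  · intro hf
    exact exists_equiv_forall_image_Ici hf (Fintype.card_fin k)
  · rintro ⟨π, hπ⟩ I hI
    refine exists_mem_of_forall_image_Ici (P := fun i I => f i < (A i ∩ onlyOne A I).card)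
      (fun hi hIJ hlt => ?_) π.surjective hπ hI
    exact hlt.trans_le (Finset.card_le_card (inter_onlyOne_subset_of_subset hi hIJ))
end

section
/- Let D be a finite set with |D| = k and let π_1,π_2,…,π_k be a permutation of {1,…,k} such that D ∩ A_{π_i} ∩ ⋁_{i ≤ j ≤ k} A_{π_j} ≠ ∅ for all i = 1,2,…,k. Then for every i = 1,2,…,k the set D ∩ A_{π_i} ∩ ⋁_{i ≤ j ≤ k} A_{π_j} has exactly one element. -/
/-! For `i < j` both `π i` and `π j` are indices of `⋁_{l ≥ i} A (π l)`, so no element of that set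
lies in both `A (π i)` and `A (π j)`. The sets in question are therefore `k` pairwise disjoint
nonempty subsets of the `k`-element set `D`, which leaves room for only one element in each. -/

theorem card_eq_one_of_pairwise_disjoint_of_card_le {α ι : Type*} [Fintype ι]
    {S : ι → Finset α} {D : Finset α} (hdisj : Pairwise (Function.onFun Disjoint S))
    (hne : ∀ i, (S i).Nonempty) (hsub : ∀ i, S i ⊆ D) (hD : D.card ≤ Fintype.card ι) (i : ι) :
    (S i).card = 1 := by
  classical
  have one_le_card : ∀ j ∈ Finset.univ, 1 ≤ (S j).card := fun j _ => (hne j).card_pos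
  have sum_card_le : ∑ j, (S j).card ≤ ∑ _j : ι, 1 :=
    calc ∑ j, (S j).card = (Finset.univ.biUnion S).card :=
          (Finset.card_biUnion fun _ _ _ _ h => hdisj h).symm
      _ ≤ D.card := Finset.card_le_card (Finset.biUnion_subset.mpr fun j _ => hsub j)
      _ ≤ Fintype.card ι := hD
      _ = ∑ _j : ι, 1 := Fintype.card_eq_sum_ones
  have sum_one_eq : ∑ _j : ι, 1 = ∑ j, (S j).card :=
    (Finset.sum_le_sum one_le_card).antisymm sum_card_le
  exact ((Finset.sum_eq_sum_iff_of_le one_le_card).mp sum_one_eq i (Finset.mem_univ i)).symm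

section

variable {α : Type*} [DecidableEq α] {k : ℕ} {A : Fin k → Finset α}

theorem eq_of_mem_onlyOne {I : Finset (Fin k)} {e : α} (he : e ∈ onlyOne A I) {i j : Fin k}
    (hi : i ∈ I) (hj : j ∈ I) (hei : e ∈ A i) (hej : e ∈ A j) : i = j :=
  Finset.card_le_one.mp (Finset.mem_filter.mp he).2.le i (Finset.mem_filter.mpr ⟨hi, hei⟩)
    j (Finset.mem_filter.mpr ⟨hj, hej⟩)

theorem disjoint_inter_onlyOne {I : Finset (Fin k)} {i j : Fin k} (hi : i ∈ I) (hj : j ∈ I)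
    (hij : i ≠ j) : Disjoint (A i ∩ onlyOne A I) (A j) := by
  refine Finset.disjoint_left.mpr fun e he hej => hij ?_
  obtain ⟨hei, heI⟩ := Finset.mem_inter.mp he
  exact eq_of_mem_onlyOne heI hi hj hei hej

variable {ι : Type*} [LinearOrder ι] {π : ι → Fin k}

theorem pairwise_disjoint_inter_onlyOne_Ici [LocallyFiniteOrderTop ι] (hπ : π.Injective) :
    Pairwise (Function.onFun Disjoint fun i => A (π i) ∩ onlyOne A ((Finset.Ici i).image π)) := by
  refine (pairwise_disjoint_on _).mpr fun i j hij => ?_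
  have hi : π i ∈ (Finset.Ici i).image π :=
    Finset.mem_image_of_mem π (Finset.mem_Ici.mpr le_rfl)
  have hj : π j ∈ (Finset.Ici i).image π :=
    Finset.mem_image_of_mem π (Finset.mem_Ici.mpr hij.le)
  exact (disjoint_inter_onlyOne hi hj (hπ.ne hij.ne)).mono_right Finset.inter_subset_left

theorem sparking_set_perm_card_one_general [Fintype ι] [LocallyFiniteOrderTop ι] {D : Finset α}
    (hD : D.card ≤ Fintype.card ι) (hπ : π.Injective)
    (hne : ∀ i, (D ∩ A (π i) ∩ onlyOne A ((Finset.Ici i).image π)).Nonempty) (i : ι) :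
    (D ∩ A (π i) ∩ onlyOne A ((Finset.Ici i).image π)).card = 1 := by
  simp only [Finset.inter_assoc] at hne ⊢
  exact card_eq_one_of_pairwise_disjoint_of_card_le
    ((pairwise_disjoint_inter_onlyOne_Ici hπ).mono fun _ _ h =>
      h.mono Finset.inter_subset_right Finset.inter_subset_right)
    hne (fun _ => Finset.inter_subset_left) hD i

end

theorem sparking_set_perm_card_one {α : Type*} [DecidableEq α] {k : ℕ}
    (A : Fin k → Finset α) (D : Finset α) (hD : D.card = k)
    (π : Equiv.Perm (Fin k))
    (hπ : ∀ i : Fin k,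
      (D ∩ A (π i) ∩ onlyOne A ((Finset.Ici i).image π)).Nonempty) :
    ∀ i : Fin k, (D ∩ A (π i) ∩ onlyOne A ((Finset.Ici i).image π)).card = 1 :=
  sparking_set_perm_card_one_general (by rw [hD, Fintype.card_fin]) π.injective hπ
end

section
/- Let D be an S-parking set of the finite sets A_1,…,A_k with k ≥ 2, and let e ∈ A_i ∩ ⋁_{1 ≤ j ≤ k} A_j for some i with 1 ≤ i ≤ k. If e ∈ D, then D \ {e} is an S-parking set of the k−1 sets A_1,…,A_{i−1}, A_{i+1},…,A_k (the family with the i-th set deleted). -/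
/-- `D` is an S-parking set of the sets `A 0, …, A (k-1)`. -/
def IsSParkingSet {α : Type*} [DecidableEq α] {k : ℕ} (A : Fin k → Finset α)
    (D : Finset α) : Prop :=
  D.card = k ∧ ∀ I : Finset (Fin k), I.Nonempty → (D ∩ onlyOne A I).Nonempty

section OnlyOne

variable {α : Type*} [DecidableEq α] {k : ℕ} {A : Fin k → Finset α} {I J : Finset (Fin k)} {e : α}

theorem mem_onlyOne_iff_existsUnique : e ∈ onlyOne A I ↔ ∃! j, j ∈ I ∧ e ∈ A j := by
  rw [onlyOne, Finset.mem_filter, Finset.card_eq_one, Finset.singleton_iff_unique_mem]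
  simp only [Finset.mem_filter, Finset.mem_biUnion, and_iff_right_iff_imp]
  exact ExistsUnique.exists

theorem notMem_onlyOne_of_subset (hIJ : I ⊆ J) (he : e ∈ onlyOne A J) {i : Fin k}
    (hiJ : i ∈ J) (hei : e ∈ A i) (hiI : i ∉ I) : e ∉ onlyOne A I := by
  intro heI
  obtain ⟨j, hjI, hej⟩ := (mem_onlyOne_iff_existsUnique.1 heI).exists
  have hij : i = j := (mem_onlyOne_iff_existsUnique.1 he).unique ⟨hiJ, hei⟩ ⟨hIJ hjI, hej⟩
  exact hiI (hij ▸ hjI)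

theorem onlyOne_map {m : ℕ} (A : Fin k → Finset α) (f : Fin m ↪ Fin k) (I : Finset (Fin m)) :
    onlyOne A (I.map f) = onlyOne (fun j => A (f j)) I := by
  have hUnion : (I.map f).biUnion A = I.biUnion fun j => A (f j) := by
    rw [Finset.map_eq_image, Finset.image_biUnion]
  simp only [onlyOne, hUnion, Finset.filter_map, Finset.card_map, Function.comp_def]

end OnlyOne

theorem sparking_set_delete_set {α : Type*} [DecidableEq α] {k : ℕ}
    (hk : 2 ≤ k + 1) (A : Fin (k + 1) → Finset α) (D : Finset α)
    (hD : IsSParkingSet A D) (i : Fin (k + 1)) (e : α)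
    (he : e ∈ A i ∩ onlyOne A Finset.univ) (heD : e ∈ D) :
    IsSParkingSet (fun j : Fin k => A (i.succAbove j)) (D.erase e) := by
  obtain ⟨hcard, hmeet⟩ := hD
  obtain ⟨hei, heUniv⟩ := Finset.mem_inter.1 he
  refine ⟨by rw [Finset.card_erase_of_mem heD, hcard, Nat.add_sub_cancel], fun I hI => ?_⟩
  have hiI : i ∉ I.map i.succAboveEmb := by simp [Fin.succAbove_ne]
  have heI : e ∉ onlyOne A (I.map i.succAboveEmb) :=
    notMem_onlyOne_of_subset (Finset.subset_univ _) heUniv (Finset.mem_univ i) hei hiI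
  have herase : D.erase e ∩ onlyOne A (I.map i.succAboveEmb) =
      D ∩ onlyOne A (I.map i.succAboveEmb) := by
    rw [Finset.erase_inter_comm, Finset.erase_eq_of_notMem heI]
  have hmeetI : (D.erase e ∩ onlyOne A (I.map i.succAboveEmb)).Nonempty :=
    herase ▸ hmeet _ hI.map
  rwa [onlyOne_map] at hmeetI
end

section
/- For any finite sets A_1,…,A_k, there exists a bijection between the set P(A_1,…,A_k) of S-parking functions of A_1,…,A_k and the set Q(A_1,…,A_k) of S-parking sets of A_1,…,A_k; in particular the number of S-parking functions of A_1,…,A_k equals the number of S-parking sets of A_1,…,A_k. -/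
/-!
Both sides satisfy the same deletion recursion. If `e` lies in `A i` and in no other set of the
subfamily indexed by `S`, then a parking function `f` either vanishes at `i`, and is a parking
function of the subfamily without `A i`, or lowering `f i` by one gives a parking function of the
sets with `e` removed. Likewise a parking set either contains `e`, and removing `e` gives a parking
set of the subfamily without `A i`, or it avoids `e` and is a parking set of the sets with `e`
removed. If no such `e` exists, there is neither a parking function nor a parking set, unless
`S` is empty, when there is exactly one of each.
-/

section PrivateElements

variable {ι α : Type*} {A : ι → Finset α} {I S : Finset ι} {i j : ι} {e : α}

/-- `e` is a private element of `A i` in the subfamily indexed by `I`: it lies in `A i` and in no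
other set of the subfamily. These are the elements along which the recursion deletes. -/
structure IsPrivate (A : ι → Finset α) (I : Finset ι) (i : ι) (e : α) : Prop where
  index_mem : i ∈ I
  mem : e ∈ A i
  eq_of_mem : ∀ j ∈ I, e ∈ A j → j = i

theorem IsPrivate.mono (h : IsPrivate A S i e) (hIS : I ⊆ S) (hi : i ∈ I) : IsPrivate A I i e :=
  ⟨hi, h.mem, fun j hj ↦ h.eq_of_mem j (hIS hj)⟩

theorem IsPrivate.notMem_of_ne (h : IsPrivate A S i e) (hj : j ∈ S) (hji : j ≠ i) : e ∉ A j :=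
  fun he ↦ hji (h.eq_of_mem j hj he)

theorem IsPrivate.notMem_biUnion_erase [DecidableEq ι] [DecidableEq α] (h : IsPrivate A S i e) :
    e ∉ (S.erase i).biUnion A := by
  simp only [Finset.mem_biUnion, Finset.mem_erase, not_exists, not_and]
  exact fun j hj ↦ h.notMem_of_ne hj.2 hj.1

theorem IsPrivate.sum_card_erase_lt [DecidableEq ι] (h : IsPrivate A S i e) :
    ∑ j ∈ S.erase i, (A j).card < ∑ j ∈ S, (A j).card :=
  Finset.sum_lt_sum_of_subset (Finset.erase_subset i S) h.index_mem (Finset.notMem_erase i S)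
    (Finset.card_pos.2 ⟨e, h.mem⟩) fun _ _ _ ↦ Nat.zero_le _

variable [DecidableEq α]

/-- The family obtained by removing `e` from every set. Removing a private element of `A i` from
every set of the subfamily affects `A i` only. -/
def eraseEach (A : ι → Finset α) (e : α) (i : ι) : Finset α :=
  (A i).erase e

theorem mem_eraseEach {x : α} : x ∈ eraseEach A e i ↔ x ≠ e ∧ x ∈ A i :=
  Finset.mem_erase

theorem notMem_biUnion_eraseEach : e ∉ S.biUnion (eraseEach A e) := by
  simp [mem_eraseEach]

theorem IsPrivate.sum_card_eraseEach_lt (h : IsPrivate A S i e) :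
    ∑ j ∈ S, (eraseEach A e j).card < ∑ j ∈ S, (A j).card :=
  Finset.sum_lt_sum (fun _ _ ↦ Finset.card_le_card (Finset.erase_subset _ _))
    ⟨i, h.index_mem, Finset.card_erase_lt_of_mem h.mem⟩

end PrivateElements

section OnlyOne

variable {α : Type*} [DecidableEq α] {k : ℕ} {A : Fin k → Finset α} {I S : Finset (Fin k)}
  {i j : Fin k} {e x : α}

theorem mem_onlyOne_iff_exists_isPrivate : x ∈ onlyOne A I ↔ ∃ i, IsPrivate A I i x := by
  simp only [onlyOne, Finset.mem_filter, Finset.mem_biUnion,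
    Finset.card_eq_one_iff_existsUnique]
  constructor
  · rintro ⟨-, i, ⟨hi, hx⟩, huniq⟩
    exact ⟨i, hi, hx, fun j hj hxj ↦ huniq j ⟨hj, hxj⟩⟩
  · rintro ⟨i, h⟩
    exact ⟨⟨i, h.index_mem, h.mem⟩, i, ⟨h.index_mem, h.mem⟩,
      fun j hj ↦ h.eq_of_mem j hj.1 hj.2⟩

theorem IsPrivate.mem_onlyOne (h : IsPrivate A I i e) : e ∈ onlyOne A I :=
  mem_onlyOne_iff_exists_isPrivate.2 ⟨i, h⟩

theorem onlyOne_subset_biUnion : onlyOne A I ⊆ I.biUnion A :=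
  Finset.filter_subset _ _

theorem onlyOne_eraseEach : onlyOne (eraseEach A e) I = (onlyOne A I).erase e := by
  ext x
  by_cases hx : x = e <;> simp [onlyOne, mem_eraseEach, hx]

theorem inter_onlyOne_eraseEach :
    eraseEach A e j ∩ onlyOne (eraseEach A e) I = (A j ∩ onlyOne A I).erase e := by
  rw [onlyOne_eraseEach, eraseEach, Finset.inter_erase, Finset.erase_inter, Finset.erase_idem]

theorem IsPrivate.card_inter_onlyOne_eraseEach_self (h : IsPrivate A I i e) :
    (eraseEach A e i ∩ onlyOne (eraseEach A e) I).card + 1 = (A i ∩ onlyOne A I).card := by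
  rw [inter_onlyOne_eraseEach,
    Finset.card_erase_add_one (Finset.mem_inter.2 ⟨h.mem, h.mem_onlyOne⟩)]

theorem card_inter_onlyOne_eraseEach_of_notMem (he : e ∉ A j) :
    (eraseEach A e j ∩ onlyOne (eraseEach A e) I).card = (A j ∩ onlyOne A I).card := by
  rw [inter_onlyOne_eraseEach,
    Finset.erase_eq_of_notMem fun h ↦ he (Finset.mem_of_mem_inter_left h)]

theorem private_deletion_induction
    {motive : (Fin k → Finset α) → Finset (Fin k) → Prop}
    (empty : ∀ A, motive A ∅)
    (no_private : ∀ A S, S.Nonempty → onlyOne A S = ∅ → motive A S)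
    (delete : ∀ A S i e, IsPrivate A S i e → motive A (S.erase i) → motive (eraseEach A e) S →
      motive A S)
    (A : Fin k → Finset α) (S : Finset (Fin k)) : motive A S := by
  induction hn : ∑ j ∈ S, (A j).card using Nat.strong_induction_on generalizing A S with
  | _ n ih =>
    subst hn
    obtain rfl | hS := S.eq_empty_or_nonempty
    · exact empty A
    obtain h | ⟨e, he⟩ := (onlyOne A S).eq_empty_or_nonempty
    · exact no_private A S hS h
    obtain ⟨i, hi⟩ := mem_onlyOne_iff_exists_isPrivate.1 he
    exact delete A S i e hi (ih _ hi.sum_card_erase_lt A _ rfl)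
      (ih _ hi.sum_card_eraseEach_lt _ S rfl)

end OnlyOne

section ParkingFunctions

variable {α : Type*} [DecidableEq α] {k : ℕ} {A : Fin k → Finset α} {S : Finset (Fin k)}
  {i : Fin k} {e : α} {f : Fin k → ℕ}

/-- The S-parking functions of the subfamily of `A` indexed by `S`, encoded as functions on the
whole index set that vanish off `S`. -/
def sParkingFuns (A : Fin k → Finset α) (S : Finset (Fin k)) : Set (Fin k → ℕ) :=
  {f | (∀ i ∉ S, f i = 0) ∧
    ∀ I ⊆ S, I.Nonempty → ∃ i ∈ I, f i < (A i ∩ onlyOne A I).card}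

theorem sParkingFuns_univ : sParkingFuns A Finset.univ = {f | IsSParkingFun A f} := by
  ext f
  simp [sParkingFuns, IsSParkingFun]

theorem sParkingFuns_empty : sParkingFuns A ∅ = {0} := by
  ext f
  simp +contextual [sParkingFuns, funext_iff, Finset.subset_empty]

theorem sParkingFuns_eq_empty (hS : S.Nonempty) (h : onlyOne A S = ∅) : sParkingFuns A S = ∅ := by
  refine Set.eq_empty_iff_forall_notMem.2 fun f hf ↦ ?_
  obtain ⟨i, -, hi⟩ := hf.2 S subset_rfl hS
  simp [h] at hi

theorem IsPrivate.mem_sParkingFuns_erase_iff (h : IsPrivate A S i e) (hf : f i = 0) :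
    f ∈ sParkingFuns A (S.erase i) ↔ f ∈ sParkingFuns A S := by
  constructor
  · refine fun ⟨hoff, hpark⟩ ↦
      ⟨fun j hj ↦ hoff j (mt Finset.mem_of_mem_erase hj), fun I hI hne ↦ ?_⟩
    by_cases hiI : i ∈ I
    · refine ⟨i, hiI, hf ▸ Finset.card_pos.2 ⟨e, ?_⟩⟩
      exact Finset.mem_inter.2 ⟨h.mem, (h.mono hI hiI).mem_onlyOne⟩
    · exact hpark I (Finset.subset_erase.2 ⟨hI, hiI⟩) hne
  · refine fun ⟨hoff, hpark⟩ ↦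
      ⟨fun j hj ↦ ?_, fun I hI ↦ hpark I (hI.trans (Finset.erase_subset i S))⟩
    obtain rfl | hji := eq_or_ne j i
    · exact hf
    · exact hoff j fun hjS ↦ hj (Finset.mem_erase.2 ⟨hji, hjS⟩)

theorem IsPrivate.add_single_mem_sParkingFuns_iff (h : IsPrivate A S i e) :
    f + Pi.single i 1 ∈ sParkingFuns A S ↔ f ∈ sParkingFuns (eraseEach A e) S := by
  have off_iff : ∀ j ∉ S, ((f + Pi.single i 1 : Fin k → ℕ) j = 0 ↔ f j = 0) := fun j hj ↦ by
    rw [Pi.add_apply, Pi.single_eq_of_ne (ne_of_mem_of_not_mem h.index_mem hj).symm, add_zero]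
  have lt_iff : ∀ I ⊆ S, ∀ j ∈ I, ((f + Pi.single i 1 : Fin k → ℕ) j < (A j ∩ onlyOne A I).card ↔
      f j < (eraseEach A e j ∩ onlyOne (eraseEach A e) I).card) := fun I hI j hj ↦ by
    obtain rfl | hji := eq_or_ne j i
    · rw [Pi.add_apply, Pi.single_eq_same, ← (h.mono hI hj).card_inter_onlyOne_eraseEach_self,
        Nat.add_lt_add_iff_right]
    · rw [Pi.add_apply, Pi.single_eq_of_ne hji, add_zero,
        card_inter_onlyOne_eraseEach_of_notMem (h.notMem_of_ne (hI hj) hji)]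
  refine and_congr (forall₂_congr off_iff) (forall₃_congr fun I hI _ ↦ ?_)
  exact exists_congr fun j ↦ and_congr_right (lt_iff I hI j)

theorem IsPrivate.sParkingFuns_eq_union (h : IsPrivate A S i e) :
    sParkingFuns A S =
      sParkingFuns A (S.erase i) ∪ (· + Pi.single i 1) '' sParkingFuns (eraseEach A e) S := by
  ext f
  constructor
  · intro hf
    obtain hfi | hfi := eq_or_ne (f i) 0
    · exact .inl ((h.mem_sParkingFuns_erase_iff hfi).2 hf)
    · have sub_add : f - Pi.single i 1 + Pi.single i 1 = f :=
        tsub_add_cancel_of_le <|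
          update_le_iff.2 ⟨Nat.one_le_iff_ne_zero.2 hfi, fun _ _ ↦ Nat.zero_le _⟩
      exact .inr ⟨_, h.add_single_mem_sParkingFuns_iff.1 (sub_add.symm ▸ hf), sub_add⟩
  · rintro (hf | ⟨g, hg, rfl⟩)
    · exact (h.mem_sParkingFuns_erase_iff (hf.1 i (Finset.notMem_erase i S))).1 hf
    · exact h.add_single_mem_sParkingFuns_iff.2 hg

theorem disjoint_sParkingFuns_erase_image_add_single (F : Set (Fin k → ℕ)) :
    Disjoint (sParkingFuns A (S.erase i)) ((· + Pi.single i 1) '' F) := by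
  rw [Set.disjoint_left]
  rintro _ hf ⟨g, -, rfl⟩
  simpa using hf.1 i (Finset.notMem_erase i S)

end ParkingFunctions

section ParkingSets

variable {α : Type*} [DecidableEq α] {k : ℕ} {A : Fin k → Finset α} {S : Finset (Fin k)}
  {i : Fin k} {e : α} {D : Finset α}

/-- The S-parking sets of the subfamily of `A` indexed by `S`. -/
def sParkingSets (A : Fin k → Finset α) (S : Finset (Fin k)) : Set (Finset α) :=
  {D | D.card = S.card ∧ ∀ I ⊆ S, I.Nonempty → (D ∩ onlyOne A I).Nonempty}

theorem sParkingSets_univ : sParkingSets A Finset.univ = {D | IsSParkingSet A D} := by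
  ext D
  simp [sParkingSets, IsSParkingSet]

theorem sParkingSets_empty : sParkingSets A ∅ = {∅} := by
  ext D
  simp +contextual [sParkingSets, Finset.subset_empty]

theorem sParkingSets_eq_empty (hS : S.Nonempty) (h : onlyOne A S = ∅) : sParkingSets A S = ∅ := by
  refine Set.eq_empty_iff_forall_notMem.2 fun D hD ↦ ?_
  simpa [h] using hD.2 S subset_rfl hS

theorem card_le_card_inter_biUnion
    (hD : ∀ I ⊆ S, I.Nonempty → (D ∩ onlyOne A I).Nonempty) :
    S.card ≤ (D ∩ S.biUnion A).card := by
  induction S using Finset.strongInduction with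
  | H S ih =>
    obtain rfl | hS := S.eq_empty_or_nonempty
    · exact Nat.zero_le _
    obtain ⟨e, he⟩ := hD S subset_rfl hS
    obtain ⟨heD, heS⟩ := Finset.mem_inter.1 he
    obtain ⟨i, hi⟩ := mem_onlyOne_iff_exists_isPrivate.1 heS
    have inter_ssubset : D ∩ (S.erase i).biUnion A ⊂ D ∩ S.biUnion A :=
      Finset.ssubset_iff_of_subset (Finset.inter_subset_inter_left
        (Finset.biUnion_subset_biUnion_of_subset_left A (Finset.erase_subset i S))) |>.2
        ⟨e, Finset.mem_inter.2 ⟨heD, onlyOne_subset_biUnion heS⟩,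
          fun h ↦ hi.notMem_biUnion_erase (Finset.mem_of_mem_inter_right h)⟩
    calc S.card = (S.erase i).card + 1 := (Finset.card_erase_add_one hi.index_mem).symm
      _ ≤ (D ∩ (S.erase i).biUnion A).card + 1 :=
        Nat.succ_le_succ <| ih _ (Finset.erase_ssubset hi.index_mem) fun I hI ↦
          hD I (hI.trans (Finset.erase_subset i S))
      _ ≤ (D ∩ S.biUnion A).card := Finset.card_lt_card inter_ssubset

theorem subset_biUnion_of_mem_sParkingSets (hD : D ∈ sParkingSets A S) : D ⊆ S.biUnion A :=
  Finset.inter_eq_left.1 <| Finset.eq_of_subset_of_card_le Finset.inter_subset_left <|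
    hD.1.trans_le (card_le_card_inter_biUnion hD.2)

theorem IsPrivate.notMem_of_mem_sParkingSets_erase (h : IsPrivate A S i e)
    (hD : D ∈ sParkingSets A (S.erase i)) : e ∉ D :=
  fun he ↦ h.notMem_biUnion_erase (subset_biUnion_of_mem_sParkingSets hD he)

theorem notMem_of_mem_sParkingSets_eraseEach (hD : D ∈ sParkingSets (eraseEach A e) S) : e ∉ D :=
  fun he ↦ notMem_biUnion_eraseEach (subset_biUnion_of_mem_sParkingSets hD he)

theorem IsPrivate.insert_mem_sParkingSets_iff (h : IsPrivate A S i e) (he : e ∉ D) :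
    insert e D ∈ sParkingSets A S ↔ D ∈ sParkingSets A (S.erase i) := by
  refine and_congr ?_ ⟨fun hmeet I hI hne ↦ ?_, fun hmeet I hI hne ↦ ?_⟩
  · rw [Finset.card_insert_of_notMem he, ← Finset.card_erase_add_one h.index_mem,
      Nat.add_right_cancel_iff]
  · have he_onlyOne : e ∉ onlyOne A I := fun heI ↦ h.notMem_biUnion_erase <|
      Finset.biUnion_subset_biUnion_of_subset_left A hI (onlyOne_subset_biUnion heI)
    simpa only [Finset.insert_inter_of_notMem he_onlyOne] using
      hmeet I (hI.trans (Finset.erase_subset i S)) hne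
  · by_cases hiI : i ∈ I
    · exact ⟨e, Finset.mem_inter.2 ⟨Finset.mem_insert_self e D, (h.mono hI hiI).mem_onlyOne⟩⟩
    · exact (hmeet I (Finset.subset_erase.2 ⟨hI, hiI⟩) hne).mono
        (Finset.inter_subset_inter_right (Finset.subset_insert e D))

theorem mem_sParkingSets_eraseEach_iff (he : e ∉ D) :
    D ∈ sParkingSets (eraseEach A e) S ↔ D ∈ sParkingSets A S := by
  have inter_eq (I : Finset (Fin k)) : D ∩ onlyOne (eraseEach A e) I = D ∩ onlyOne A I := by
    rw [onlyOne_eraseEach, Finset.inter_erase,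
      Finset.erase_eq_of_notMem fun h ↦ he (Finset.mem_of_mem_inter_left h)]
  simp only [sParkingSets, Set.mem_ofPred_eq, inter_eq]

theorem IsPrivate.sParkingSets_eq_union (h : IsPrivate A S i e) :
    sParkingSets A S =
      insert e '' sParkingSets A (S.erase i) ∪ sParkingSets (eraseEach A e) S := by
  ext D
  constructor
  · intro hD
    by_cases he : e ∈ D
    · refine .inl ⟨D.erase e, ?_, Finset.insert_erase he⟩
      rwa [← h.insert_mem_sParkingSets_iff (Finset.notMem_erase e D), Finset.insert_erase he]
    · exact .inr ((mem_sParkingSets_eraseEach_iff he).2 hD)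
  · rintro (⟨D, hD, rfl⟩ | hD)
    · exact (h.insert_mem_sParkingSets_iff (h.notMem_of_mem_sParkingSets_erase hD)).2 hD
    · exact (mem_sParkingSets_eraseEach_iff (notMem_of_mem_sParkingSets_eraseEach hD)).1 hD

theorem disjoint_image_insert_sParkingSets_eraseEach (F : Set (Finset α)) :
    Disjoint (insert e '' F) (sParkingSets (eraseEach A e) S) := by
  rw [Set.disjoint_left]
  rintro _ ⟨D, -, rfl⟩ hD
  exact notMem_of_mem_sParkingSets_eraseEach hD (Finset.mem_insert_self e D)

theorem IsPrivate.injOn_insert_sParkingSets_erase (h : IsPrivate A S i e) :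
    Set.InjOn (insert e) (sParkingSets A (S.erase i)) := fun D hD E hE hDE ↦ by
  rw [← Finset.erase_insert (h.notMem_of_mem_sParkingSets_erase hD), hDE,
    Finset.erase_insert (h.notMem_of_mem_sParkingSets_erase hE)]

end ParkingSets

theorem nonempty_sParkingFuns_equiv_sParkingSets {α : Type*} [DecidableEq α] {k : ℕ}
    (A : Fin k → Finset α) (S : Finset (Fin k)) :
    Nonempty (sParkingFuns A S ≃ sParkingSets A S) := by
  classical
  induction A, S using private_deletion_induction with
  | empty A =>
    rw [sParkingFuns_empty, sParkingSets_empty]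
    exact ⟨Equiv.ofUnique _ _⟩
  | no_private A S hS h =>
    rw [sParkingFuns_eq_empty hS h, sParkingSets_eq_empty hS h]
    exact ⟨Equiv.equivOfIsEmpty _ _⟩
  | delete A S i e h ih_erase ih_eraseEach =>
    obtain ⟨φ⟩ := ih_erase
    obtain ⟨ψ⟩ := ih_eraseEach
    rw [h.sParkingFuns_eq_union, h.sParkingSets_eq_union]
    let lower := Equiv.Set.image (· + Pi.single i 1) (sParkingFuns (eraseEach A e) S)
      (add_left_injective _)
    let insertPrivate := Equiv.Set.imageOfInjOn (insert e) _ h.injOn_insert_sParkingSets_erase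
    exact ⟨(Equiv.Set.union (disjoint_sParkingFuns_erase_image_add_single _)).trans <|
      ((φ.trans insertPrivate).sumCongr (lower.symm.trans ψ)).trans
        (Equiv.Set.union (disjoint_image_insert_sParkingSets_eraseEach _)).symm⟩

theorem sparking_fun_set_bijection {α : Type*} [DecidableEq α] {k : ℕ}
    (A : Fin k → Finset α) :
    (∃ φ : {f : Fin k → ℕ // IsSParkingFun A f} →
        {D : Finset α // IsSParkingSet A D}, Function.Bijective φ) ∧
      {f : Fin k → ℕ | IsSParkingFun A f}.ncard
        = {D : Finset α | IsSParkingSet A D}.ncard := by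
  obtain ⟨φ⟩ := nonempty_sParkingFuns_equiv_sParkingSets A Finset.univ
  rw [sParkingFuns_univ, sParkingSets_univ] at φ
  exact ⟨⟨φ, φ.bijective⟩, Set.ncard_congr' φ⟩
end

section
/- Let G be a connected simple graph with vertex set {0,1,…,n}. Then the number of G-parking functions of G (with respect to vertex 0) equals the number of spanning trees of G. -/
/-- `f : {1,…,n} → ℕ` (with vertex `i` of `G` encoded as `i.succ : Fin (n+1)`,
vertex `0` being the root) is a G-parking function of `G` with respect to `0`:
for every nonempty `V' ⊆ {1,…,n}` there is `i ∈ V'` whose number of neighbours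
outside `V'` exceeds `f i`. -/
def IsGParkingFun {n : ℕ} (G : SimpleGraph (Fin (n + 1)))
    [DecidableRel G.Adj] (f : Fin n → ℕ) : Prop :=
  ∀ V' : Finset (Fin n), V'.Nonempty →
    ∃ i ∈ V', f i <
      ((Finset.univ \ V'.image Fin.succ).filter fun v => G.Adj i.succ v).card

/-!
Fix a root `r` and a level function `l : V → ℕ` with `l r = 0`. For a vertex `v ≠ r`, let `P v` be
the set of neighbours of `v` on level `l v - 1`.

A spanning tree with distances `l` to the root amounts to the choice of a parent in `P v` for every
`v ≠ r`. On the other side, given a function `f`, burn the root at time `0`, and burn `v` one time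
unit after more than `f v` of its neighbours have caught fire. The parking functions are those for
which the whole graph burns, and `v` burns exactly at time `l v` if and only if `f v` lies between
the number of neighbours on levels `< l v - 1` and the number on levels `< l v`, an interval with
`#(P v)` elements. Hence for each `l` there are as many trees with distances `l` as parking
functions with burning times `l`.
-/

open Set

lemma ncard_setOf_exists_congr {α β ι : Type*} {R : α → ι → Prop} {S : β → ι → Prop}
    (hR : Relator.RightUnique R) (hS : Relator.RightUnique S)
    (e : ∀ i, Nonempty ({a | R a i} ≃ {b | S b i})) :
    {a | ∃ i, R a i}.ncard = {b | ∃ i, S b i}.ncard := by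
  have hR' : Pairwise (Function.onFun Disjoint fun i ↦ {a | R a i}) := fun _ _ hij ↦
    Set.disjoint_left.2 fun _ hi hj ↦ hij (hR hi hj)
  have hS' : Pairwise (Function.onFun Disjoint fun i ↦ {b | S b i}) := fun _ _ hij ↦
    Set.disjoint_left.2 fun _ hi hj ↦ hij (hS hi hj)
  rw [ofPred_exists, ofPred_exists]
  exact Nat.card_congr <| (unionEqSigmaOfDisjoint hR').trans <|
    (Equiv.sigmaCongrRight fun i ↦ (e i).some).trans (unionEqSigmaOfDisjoint hS').symm

lemma exists_preimage_Iio_eq {α : Type*} {S : ℕ → Set α} (hS : Monotone S) (h₀ : S 0 = ∅)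
    (hcover : ∀ a, ∃ k, a ∈ S k) : ∃ l : α → ℕ, ∀ k, l ⁻¹' Iio k = S k := by
  classical
  have hcover' (a : α) : ∃ k, a ∈ S (k + 1) :=
    (hcover a).imp fun k hk ↦ hS k.le_succ hk
  refine ⟨fun a ↦ Nat.find (hcover' a), fun k ↦ Set.ext fun a ↦ ⟨fun h ↦ ?_, fun h ↦ ?_⟩⟩
  · exact hS (Nat.succ_le_of_lt h) (Nat.find_spec (hcover' a))
  · cases k with
    | zero => simp [h₀] at h
    | succ k => exact Nat.lt_succ_of_le (Nat.find_min' (hcover' a) h)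

lemma eq_of_preimage_Iio_eq {α β : Type*} [LinearOrder β] {l l' : α → β}
    (h : ∀ k, l ⁻¹' Iio k = l' ⁻¹' Iio k) : l = l' :=
  funext fun a ↦ eq_of_forall_gt_iff fun k ↦ Set.ext_iff.1 (h k) a

lemma exists_adj_dist_add_one_eq {V : Type*} {G : SimpleGraph V} {v r : V}
    (h : G.Reachable v r) (hne : v ≠ r) : ∃ w, G.Adj v w ∧ G.dist w r + 1 = G.dist v r := by
  obtain ⟨p, hp⟩ := h.exists_walk_length_eq_dist
  cases p with
  | nil => exact absurd rfl hne
  | @cons _ w _ hvw p =>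
    refine ⟨w, hvw, le_antisymm ?_ ?_⟩
    · rw [← hp, SimpleGraph.Walk.length_cons]
      exact Nat.add_le_add_right (SimpleGraph.dist_le p) 1
    · obtain ⟨q, hq⟩ := p.reachable.exists_walk_length_eq_dist
      rw [← hq, ← SimpleGraph.Walk.length_cons hvw]
      exact SimpleGraph.dist_le _

section Levels

variable {V : Type*} (G : SimpleGraph V) (l : V → ℕ) (v : V)

/-- The possible parents of `v` in a spanning tree of `G` with distances `l` to the root. -/
def levelParents : Set V :=
  {w ∈ G.neighborSet v | l w + 1 = l v}

/-- The values of `f v` for which `v` burns at time `l v`, if each other vertex `w` burns at time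
`l w`. When `l v = 0`, truncated subtraction makes the interval empty. -/
def burningWindow : Set ℕ :=
  Ico (G.neighborSet v ∩ l ⁻¹' Iio (l v - 1)).ncard (G.neighborSet v ∩ l ⁻¹' Iio (l v)).ncard

lemma levelParents_eq_sdiff : levelParents G l v =
    (G.neighborSet v ∩ l ⁻¹' Iio (l v)) \ (G.neighborSet v ∩ l ⁻¹' Iio (l v - 1)) := by
  ext w
  simp only [levelParents, mem_sdiff, mem_inter_iff, mem_preimage, mem_Iio, mem_ofPred_eq]
  grind

lemma ncard_burningWindow [Finite V] :
    (burningWindow G l v).ncard = (levelParents G l v).ncard := by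
  have hsub : G.neighborSet v ∩ l ⁻¹' Iio (l v - 1) ⊆ G.neighborSet v ∩ l ⁻¹' Iio (l v) :=
    inter_subset_inter_right _ (preimage_mono (Iio_subset_Iio (Nat.sub_le _ _)))
  rw [levelParents_eq_sdiff, ncard_sdiff hsub, burningWindow, ← Finset.coe_Ico,
    ncard_coe_finset, Nat.card_Ico]

end Levels

section Parking

variable {V : Type*} {r : V}

/-- Parking functions of a graph on an arbitrary vertex type `V` with respect to the root `r`. -/
def IsParkingFun (G : SimpleGraph V) (r : V) (f : {v // v ≠ r} → ℕ) : Prop :=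
  ∀ S : Set V, S.Nonempty → r ∉ S → ∃ v : {v // v ≠ r}, ↑v ∈ S ∧ f v < (G.neighborSet v \ S).ncard

/-- One step of Dhar's burning algorithm: the vertices that burn at the next time if those of `U`
are burning now. The root always does. -/
def burnStep (G : SimpleGraph V) (f : {v // v ≠ r} → ℕ) (U : Set V) : Set V :=
  {v | ∀ h : v ≠ r, f ⟨v, h⟩ < (G.neighborSet v ∩ U).ncard}

/-- The burning algorithm for `f` burns each vertex `v` exactly at time `l v`. -/
def IsBurningTime (G : SimpleGraph V) (f : {v // v ≠ r} → ℕ) (l : V → ℕ) : Prop :=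
  ∀ k, l ⁻¹' Iio (k + 1) = burnStep G f (l ⁻¹' Iio k)

variable {G : SimpleGraph V} {f : {v // v ≠ r} → ℕ} {l : V → ℕ}

lemma root_mem_burnStep (U : Set V) : r ∈ burnStep G f U :=
  fun h ↦ absurd rfl h

lemma monotone_burnStep [Finite V] : Monotone (burnStep G f) := fun _ _ hU _ hv h ↦
  (hv h).trans_le (ncard_le_ncard (inter_subset_inter_right _ hU))

lemma isParkingFun_iff_forall_burnStep_subset :
    IsParkingFun G r f ↔ ∀ U, burnStep G f U ⊆ U → U = univ := by
  constructor
  · intro hf U hU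
    by_contra hne
    obtain ⟨v, hvU, hv⟩ :=
      hf Uᶜ (nonempty_compl.2 hne) (notMem_compl_iff.2 (hU (root_mem_burnStep U)))
    rw [sdiff_compl] at hv
    exact hvU (hU fun _ ↦ hv)
  · intro hf S hS hr
    have hSc : ¬ burnStep G f Sᶜ ⊆ Sᶜ := fun h ↦
      hS.ne_empty (compl_univ_iff.1 (hf _ h))
    obtain ⟨v, hv, hvS⟩ := not_subset.1 hSc
    rw [notMem_compl_iff] at hvS
    have hvr : v ≠ r := ne_of_mem_of_not_mem hvS hr
    exact ⟨⟨v, hvr⟩, hvS, hv hvr⟩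

namespace IsBurningTime

lemma root_eq_zero (hl : IsBurningTime G f l) : l r = 0 := by
  have : r ∈ l ⁻¹' Iio (0 + 1) := hl 0 ▸ root_mem_burnStep _
  simpa using this

lemma lt_succ_iff (hl : IsBurningTime G f l) (v : {v // v ≠ r}) (k : ℕ) :
    l v < k + 1 ↔ f v < (G.neighborSet v ∩ l ⁻¹' Iio k).ncard := by
  have hmem : ↑v ∈ l ⁻¹' Iio (k + 1) ↔ ↑v ∈ burnStep G f (l ⁻¹' Iio k) := by rw [hl k]
  exact hmem.trans (forall_prop_of_true v.2)

lemma rightUnique : Relator.RightUnique (IsBurningTime (r := r) G) := by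
  intro f l l' hl hl'
  refine eq_of_preimage_Iio_eq fun k ↦ ?_
  induction k with
  | zero => simp
  | succ k ih => rw [hl k, hl' k, ih]

lemma isParkingFun [Finite V] (hl : IsBurningTime G f l) : IsParkingFun G r f := by
  refine isParkingFun_iff_forall_burnStep_subset.2 fun U hU ↦ eq_univ_of_forall fun v ↦ ?_
  have burnt_subset (k : ℕ) : l ⁻¹' Iio k ⊆ U := by
    induction k with
    | zero => simp
    | succ k ih => exact (hl k).trans_subset ((monotone_burnStep ih).trans hU)
  exact burnt_subset (l v + 1) (Nat.lt_succ_self _)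

end IsBurningTime

lemma IsParkingFun.exists_mem_iterate_burnStep [Finite V] (hf : IsParkingFun G r f) (v : V) :
    ∃ k, v ∈ (burnStep G f)^[k] ∅ := by
  have hmono : Monotone fun k ↦ (burnStep G f)^[k] ∅ :=
    monotone_burnStep.monotone_iterate_of_le_map (empty_subset _)
  obtain ⟨k, hk⟩ := WellFoundedGT.monotone_chain_condition ⟨_, hmono⟩
  have hfixed : burnStep G f ((burnStep G f)^[k] ∅) = (burnStep G f)^[k] ∅ := by
    rw [← Function.iterate_succ_apply' (burnStep G f)]
    exact (hk (k + 1) k.le_succ).symm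
  exact ⟨k, eq_univ_iff_forall.1
    (isParkingFun_iff_forall_burnStep_subset.1 hf _ hfixed.subset) v⟩

lemma isParkingFun_iff_exists_isBurningTime [Finite V] :
    IsParkingFun G r f ↔ ∃ l, IsBurningTime G f l := by
  refine ⟨fun hf ↦ ?_, fun ⟨_, hl⟩ ↦ hl.isParkingFun⟩
  obtain ⟨l, hl⟩ := exists_preimage_Iio_eq
    (monotone_burnStep.monotone_iterate_of_le_map (empty_subset _)) rfl
    hf.exists_mem_iterate_burnStep
  exact ⟨l, fun k ↦ by rw [hl, hl, Function.iterate_succ_apply']⟩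

lemma isBurningTime_iff_mem_burningWindow [Finite V] (hl : l r = 0) :
    IsBurningTime G f l ↔ ∀ v : {v // v ≠ r}, f v ∈ burningWindow G l v := by
  have ncard_mono (v : V) {j k : ℕ} (hjk : j ≤ k) :
      (G.neighborSet v ∩ l ⁻¹' Iio j).ncard ≤ (G.neighborSet v ∩ l ⁻¹' Iio k).ncard :=
    ncard_le_ncard (inter_subset_inter_right _ (preimage_mono (Iio_subset_Iio hjk)))
  constructor
  · refine fun h v ↦ ⟨?_, (h.lt_succ_iff v _).1 (Nat.lt_succ_self _)⟩
    have not_burnt_before := (h.lt_succ_iff v (l v - 1)).not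
    rcases Nat.eq_zero_or_pos (l v) with h₀ | hpos
    · simp [h₀]
    · omega
  · refine fun h k ↦ Set.ext fun v ↦ ⟨fun hv hvr ↦ ?_, fun hv ↦ ?_⟩
    · exact (h ⟨v, hvr⟩).2.trans_le (ncard_mono v (Nat.le_of_lt_succ hv))
    · by_contra hlt
      rw [mem_preimage, mem_Iio, not_lt] at hlt
      have hvr : v ≠ r := by rintro rfl; omega
      exact (((h ⟨v, hvr⟩).1.trans_lt (hv hvr)).not_ge
        (ncard_mono v (Nat.le_sub_one_of_lt hlt)))

end Parking

section Trees

variable {V : Type*} {r : V}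

/-- The spanning trees `T` of `G` in which every vertex `v` has distance `l v` from the root. -/
def IsSpanningTreeWithDist (G : SimpleGraph V) (r : V) (T : SimpleGraph V) (l : V → ℕ) : Prop :=
  T ≤ G ∧ T.IsTree ∧ ∀ v, T.dist v r = l v

lemma rightUnique_isSpanningTreeWithDist (G : SimpleGraph V) (r : V) :
    Relator.RightUnique (IsSpanningTreeWithDist G r) :=
  fun _ _ _ h h' ↦ funext fun v ↦ (h.2.2 v).symm.trans (h'.2.2 v)

/-- The graph that joins every vertex `v ≠ r` to its parent `p v`. -/
def parentGraph (p : {v // v ≠ r} → V) : SimpleGraph V :=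
  .fromRel fun v w ↦ ∃ h : v ≠ r, p ⟨v, h⟩ = w

namespace parentGraph

variable {p : {v // v ≠ r} → V} {l : V → ℕ}

lemma le_iff (hp : ∀ v, p v ≠ v.1) {G : SimpleGraph V} :
    parentGraph p ≤ G ↔ ∀ v, G.Adj v.1 (p v) := by
  constructor
  · exact fun h v ↦ h ⟨(hp v).symm, .inl ⟨v.2, rfl⟩⟩
  · rintro h v w ⟨-, ⟨hv, rfl⟩ | ⟨hw, rfl⟩⟩
    · exact h ⟨v, hv⟩
    · exact (h ⟨w, hw⟩).symm

lemma ne_of_level (hp : ∀ v, l (p v) + 1 = l v.1) (v : {v // v ≠ r}) : p v ≠ v := fun h ↦ by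
  have := hp v
  rw [h] at this
  omega

lemma adj_parent (hp : ∀ v, l (p v) + 1 = l v.1) (v : {v // v ≠ r}) :
    (parentGraph p).Adj v (p v) :=
  (le_iff (ne_of_level hp)).1 le_rfl v

lemma exists_eq_parent_of_adj (hp : ∀ v, l (p v) + 1 = l v.1) {v w : V}
    (h : (parentGraph p).Adj v w) (hle : l w ≤ l v) : ∃ hv : v ≠ r, p ⟨v, hv⟩ = w := by
  obtain ⟨-, hv | ⟨hw, rfl⟩⟩ := h
  · exact hv
  · have : l _ + 1 = l w := hp ⟨w, hw⟩
    omega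

lemma level_le_of_adj (hp : ∀ v, l (p v) + 1 = l v.1) {v w : V} (h : (parentGraph p).Adj v w) :
    l v ≤ l w + 1 := by
  by_contra! hlt
  obtain ⟨hv, rfl⟩ := exists_eq_parent_of_adj hp h (by omega)
  have : l _ + 1 = l v := hp ⟨v, hv⟩
  omega

lemma level_le_add_length (hp : ∀ v, l (p v) + 1 = l v.1) {v w : V} (q : (parentGraph p).Walk v w) :
    l v ≤ l w + q.length := by
  induction q with
  | nil => simp
  | cons h q ih =>
    have := level_le_of_adj hp h
    rw [SimpleGraph.Walk.length_cons]
    omega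

lemma exists_walk_length_eq (hl : l r = 0) (hp : ∀ v, l (p v) + 1 = l v.1) (v : V) :
    ∃ q : (parentGraph p).Walk v r, q.length = l v := by
  induction hk : l v generalizing v with
  | zero =>
    obtain rfl : v = r := by
      by_contra hv
      have : l _ + 1 = l v := hp ⟨v, hv⟩
      omega
    exact ⟨.nil, rfl⟩
  | succ k ih =>
    have hv : v ≠ r := by rintro rfl; omega
    have : l _ + 1 = l v := hp ⟨v, hv⟩
    obtain ⟨q, hq⟩ := ih (p ⟨v, hv⟩) (by omega)
    exact ⟨.cons (adj_parent hp ⟨v, hv⟩) q, by rw [SimpleGraph.Walk.length_cons, hq]⟩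

lemma connected (hl : l r = 0) (hp : ∀ v, l (p v) + 1 = l v.1) : (parentGraph p).Connected :=
  SimpleGraph.connected_iff_exists_forall_reachable _ |>.2
    ⟨r, fun v ↦ (exists_walk_length_eq hl hp v).choose.reachable.symm⟩

lemma dist_eq (hl : l r = 0) (hp : ∀ v, l (p v) + 1 = l v.1) (v : V) :
    (parentGraph p).dist v r = l v := by
  apply le_antisymm
  · obtain ⟨q, hq⟩ := exists_walk_length_eq hl hp v
    exact hq ▸ SimpleGraph.dist_le q
  · obtain ⟨q, hq⟩ := (connected hl hp).exists_walk_length_eq_dist v r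
    simpa [hl, hq] using level_le_add_length hp q

lemma isAcyclic (hp : ∀ v, l (p v) + 1 = l v.1) : (parentGraph p).IsAcyclic := by
  classical
  intro u c hc
  -- At a vertex of maximal level on the cycle, both neighbours would be its parent.
  obtain ⟨v, hv, hmax⟩ :=
    c.support.toFinset.exists_max_image l ⟨u, List.mem_toFinset.2 c.start_mem_support⟩
  simp only [List.mem_toFinset] at hv hmax
  have hcv := hc.rotate hv
  have hle {w : V} (hw : w ∈ (c.rotate v hv).support) : l w ≤ l v :=
    hmax w (by simpa using hw)
  obtain ⟨hvr, hsnd⟩ := exists_eq_parent_of_adj hp ((c.rotate v hv).adj_snd hcv.not_nil)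
    (hle (SimpleGraph.Walk.getVert_mem_support _ _))
  obtain ⟨_, hpen⟩ := exists_eq_parent_of_adj hp ((c.rotate v hv).adj_penultimate hcv.not_nil).symm
    (hle (SimpleGraph.Walk.getVert_mem_support _ _))
  exact hcv.snd_ne_penultimate (hsnd.symm.trans hpen)

lemma isTree (hl : l r = 0) (hp : ∀ v, l (p v) + 1 = l v.1) : (parentGraph p).IsTree :=
  ⟨connected hl hp, isAcyclic hp⟩

end parentGraph

variable {G : SimpleGraph V} {l : V → ℕ}

lemma bijOn_parentGraph (hl : l r = 0) :
    BijOn parentGraph (univ.pi fun v : {v // v ≠ r} ↦ levelParents G l v)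
      {T | IsSpanningTreeWithDist G r T l} := by
  refine ⟨fun p hp ↦ ?_, fun p hp p' hp' h ↦ funext fun v ↦ ?_, fun T hT ↦ ?_⟩
  · have hlev (v) : l (p v) + 1 = l v.1 := (hp v trivial).2
    exact ⟨(parentGraph.le_iff (parentGraph.ne_of_level hlev)).2 fun v ↦ (hp v trivial).1,
      parentGraph.isTree hl hlev, parentGraph.dist_eq hl hlev⟩
  · have hlev (v) : l (p v) + 1 = l v.1 := (hp v trivial).2
    have hlev' (v) : l (p' v) + 1 = l v.1 := (hp' v trivial).2
    have hadj : (parentGraph p).Adj v (p' v) := h ▸ parentGraph.adj_parent hlev' v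
    exact (parentGraph.exists_eq_parent_of_adj hlev hadj (by have := hlev' v; omega)).2
  · obtain ⟨hTG, hT, hdist⟩ := hT
    choose p hadj hlev using fun v : {v // v ≠ r} ↦
      exists_adj_dist_add_one_eq (hT.connected v r) v.2
    simp only [hdist] at hlev
    have hle : parentGraph p ≤ T := (parentGraph.le_iff (parentGraph.ne_of_level hlev)).2 hadj
    exact ⟨p, fun v _ ↦ ⟨hTG (hadj v), hlev v⟩, hle.antisymm <|
      (SimpleGraph.isTree_iff_minimal_connected.1 hT).2 (parentGraph.connected hl hlev) hle⟩

end Trees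

theorem nonempty_equiv_isBurningTime_isSpanningTreeWithDist {V : Type*} [Finite V]
    (G : SimpleGraph V) (r : V) (l : V → ℕ) :
    Nonempty ({f : {v // v ≠ r} → ℕ | IsBurningTime G f l} ≃
      {T | IsSpanningTreeWithDist G r T l}) := by
  by_cases hl : l r = 0
  · have hwin : {f : {v // v ≠ r} → ℕ | IsBurningTime G f l} =
        univ.pi fun v : {v // v ≠ r} ↦ burningWindow G l v := by
      ext f
      simp [isBurningTime_iff_mem_burningWindow hl]
    have (v : V) : Finite (burningWindow G l v) := (finite_Ico _ _).to_subtype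
    have hcard (v : {v // v ≠ r}) : Nonempty (burningWindow G l v ≃ levelParents G l v) :=
      Finite.card_eq.1 (ncard_burningWindow G l v)
    rw [hwin]
    exact ⟨(Equiv.Set.univPi _).trans <| (Equiv.piCongrRight fun v ↦ (hcard v).some).trans <|
      (Equiv.Set.univPi fun v : {v // v ≠ r} ↦ levelParents G l v).symm.trans
        (bijOn_parentGraph hl).equiv⟩
  · have : IsEmpty {f : {v // v ≠ r} → ℕ | IsBurningTime G f l} :=
      ⟨fun f ↦ hl f.2.root_eq_zero⟩
    have : IsEmpty {T | IsSpanningTreeWithDist G r T l} :=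
      ⟨fun T ↦ hl (by rw [← T.2.2.2 r, SimpleGraph.dist_self])⟩
    exact ⟨Equiv.equivOfIsEmpty _ _⟩

theorem card_gParkingFun_eq_card_spanningTrees_general {V : Type*} [Finite V] (G : SimpleGraph V)
    (r : V) : {f | IsParkingFun G r f}.ncard = {T : SimpleGraph V | T ≤ G ∧ T.IsTree}.ncard := by
  have hparking : {f | IsParkingFun G r f} = {f | ∃ l, IsBurningTime G f l} :=
    Set.ext fun _ ↦ isParkingFun_iff_exists_isBurningTime
  have htrees : {T : SimpleGraph V | T ≤ G ∧ T.IsTree} =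
      {T | ∃ l, IsSpanningTreeWithDist G r T l} :=
    Set.ext fun T ↦ ⟨fun h ↦ ⟨(T.dist · r), h.1, h.2, fun _ ↦ rfl⟩, fun ⟨_, h⟩ ↦ ⟨h.1, h.2.1⟩⟩
  rw [hparking, htrees]
  exact ncard_setOf_exists_congr IsBurningTime.rightUnique
    (rightUnique_isSpanningTreeWithDist G r)
    (nonempty_equiv_isBurningTime_isSpanningTreeWithDist G r)

section Fin

variable {n : ℕ} (G : SimpleGraph (Fin (n + 1)))

lemma card_filter_adj_sdiff_image_succ [DecidableRel G.Adj] (s : Finset (Fin n))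
    (v : Fin (n + 1)) :
    ((Finset.univ \ s.image Fin.succ).filter fun w ↦ G.Adj v w).card =
      (G.neighborSet v \ Fin.succ '' s).ncard := by
  rw [← ncard_coe_finset]
  congr 1
  ext w
  simp [and_comm]

lemma isGParkingFun_comp_finSuccAboveEquiv_iff [DecidableRel G.Adj]
    (f : {v : Fin (n + 1) // v ≠ 0} → ℕ) :
    IsGParkingFun G (f ∘ finSuccAboveEquiv 0) ↔ IsParkingFun G 0 f := by
  simp only [IsGParkingFun, card_filter_adj_sdiff_image_succ]
  constructor
  · intro hf S hS h₀
    obtain ⟨s, rfl⟩ : ∃ s : Finset (Fin n), Fin.succ '' (s : Set (Fin n)) = S := by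
      refine ⟨(toFinite (Fin.succ ⁻¹' S)).toFinset, ?_⟩
      rw [Finite.coe_toFinset, image_preimage_eq_of_subset]
      rwa [Fin.range_succ, subset_compl_singleton_iff]
    obtain ⟨i, hi, hlt⟩ := hf s (by simpa using hS)
    exact ⟨finSuccAboveEquiv 0 i, mem_image_of_mem _ hi, hlt⟩
  · intro hf s hs
    obtain ⟨⟨_, _⟩, ⟨i, hi, rfl⟩, hlt⟩ :=
      hf (Fin.succ '' s) (hs.to_set.image _) (by simp)
    exact ⟨i, hi, hlt⟩

lemma ncard_setOf_isGParkingFun [DecidableRel G.Adj] :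
    {f : Fin n → ℕ | IsGParkingFun G f}.ncard = {f | IsParkingFun G 0 f}.ncard :=
  (Nat.card_congr <| ((finSuccAboveEquiv (0 : Fin (n + 1))).symm.arrowCongr (.refl ℕ)).subtypeEquiv
    fun f ↦ (isGParkingFun_comp_finSuccAboveEquiv_iff G f).symm).symm

end Fin

theorem card_gParkingFun_eq_card_spanningTrees {n : ℕ}
    (G : SimpleGraph (Fin (n + 1))) [DecidableRel G.Adj] (hG : G.Connected) :
    {f : Fin n → ℕ | IsGParkingFun G f}.ncard
      = {T : SimpleGraph (Fin (n + 1)) | T ≤ G ∧ T.IsTree}.ncard :=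
  (ncard_setOf_isGParkingFun G).trans (card_gParkingFun_eq_card_spanningTrees_general G 0)
end
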